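/- arXiv:2210.03526 — 2 statements merged into one kernel-verified Lean document; each statement's English description precedes it below -/
import Mathlib

section
/- Let K be a natural number, a ∈ ℝ, and c, w, b ∈ ℝ^K. Define û(x) = Σ_{k=1}^K c_k tanh(w_k x + b_k) and the PDE loss L_F(c, w, b) = (1/(2π)) ∫₀^{2π} (û″(x) + a² sin(a x))² dx. Then for every index k, the partial derivative of L_F with respect to b_k satisfies |∂L_F/∂b_k| ≤ 8 (Σ_{j=1}^K |c_j| w_j² + a²) · |c_k| w_k². -/
/-!
The second derivative of `tanh` is `g = -2 tanh (1 - tanh²)`, which satisfies `|g| ≤ 2` and is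
`2`-Lipschitz because `g' = -2 (1 - tanh²) (1 - 3 tanh²)` and `0 ≤ tanh² < 1`. Hence the residual
`F_b(x) = ∑ j, c j * w j ^ 2 * g (w j * x + b j) + a ^ 2 * sin (a * x)` satisfies
`|F_b(x)| ≤ 2 (∑ j, |c j| * w j ^ 2 + a ^ 2)`, and it is Lipschitz in the coordinate `b k` with
constant `2 |c k| w k ^ 2`, uniformly in `x`.
From `F² - G² = (F - G) (F + G)` the integrand, and therefore its mean over `[0, 2π]`, is
Lipschitz in `b k` with constant `8 (∑ j, |c j| * w j ^ 2 + a ^ 2) |c k| w k ^ 2`. A Lipschitz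
constant bounds the derivative, so no differentiation under the integral sign is needed.
-/

/-- The second derivative of `tanh`, in closed form. -/
noncomputable def tanhSecond (s : ℝ) : ℝ := -2 * Real.tanh s * (1 - Real.tanh s ^ 2)

lemma hasDerivAt_tanh' (s : ℝ) : HasDerivAt Real.tanh (1 - Real.tanh s ^ 2) s := by
  have hc : Real.cosh s ≠ 0 := (Real.cosh_pos s).ne'
  have h := (Real.hasDerivAt_sinh s).div (Real.hasDerivAt_cosh s) hc
  have e : Real.sinh / Real.cosh = Real.tanh := by
    funext y
    simp [Real.tanh_eq_sinh_div_cosh]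
  rw [e] at h
  refine h.congr_deriv ?_
  rw [Real.tanh_eq_sinh_div_cosh]
  field_simp

lemma hasDerivAt_one_sub_tanh_sq (s : ℝ) :
    HasDerivAt (fun s => 1 - Real.tanh s ^ 2) (tanhSecond s) s := by
  refine (((hasDerivAt_tanh' s).pow 2).const_sub 1).congr_deriv ?_
  simp only [tanhSecond]
  ring

lemma hasDerivAt_tanhSecond (s : ℝ) :
    HasDerivAt tanhSecond (-2 * (1 - Real.tanh s ^ 2) * (1 - 3 * Real.tanh s ^ 2)) s := by
  refine (((hasDerivAt_tanh' s).const_mul (-2)).mul (hasDerivAt_one_sub_tanh_sq s)).congr_deriv ?_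
  simp only [tanhSecond]
  ring

lemma abs_tanhSecond_le (s : ℝ) : |tanhSecond s| ≤ 2 := by
  have h1 := Real.abs_tanh_lt_one s
  have h2 := Real.tanh_sq_lt_one s
  have h3 : |1 - Real.tanh s ^ 2| ≤ 1 := by
    rw [abs_le]
    constructor <;> nlinarith [sq_nonneg (Real.tanh s)]
  rw [tanhSecond, abs_mul, abs_mul]
  norm_num
  nlinarith [abs_nonneg (Real.tanh s), abs_nonneg (1 - Real.tanh s ^ 2)]

lemma abs_tanhSecond_sub_le (s t : ℝ) : |tanhSecond t - tanhSecond s| ≤ 2 * |t - s| := by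
  refine Convex.norm_image_sub_le_of_norm_hasDerivWithin_le (s := Set.univ)
    (fun x _ => (hasDerivAt_tanhSecond x).hasDerivWithinAt) (fun x _ => ?_) convex_univ
    (Set.mem_univ s) (Set.mem_univ t)
  have h2 := Real.tanh_sq_lt_one x
  have h0 := sq_nonneg (Real.tanh x)
  rw [Real.norm_eq_abs, abs_le]
  constructor <;> nlinarith

lemma deriv_deriv_network {K : ℕ} (c w b : Fin K → ℝ) (x : ℝ) :
    deriv (deriv fun y => ∑ k, c k * Real.tanh (w k * y + b k)) x =
      ∑ k, c k * w k ^ 2 * tanhSecond (w k * x + b k) := by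
  have hlin : ∀ k y, HasDerivAt (fun y => w k * y + b k) (w k) y := fun k y => by
    simpa using ((hasDerivAt_id y).const_mul (w k)).add_const (b k)
  have h1 : (deriv fun y => ∑ k, c k * Real.tanh (w k * y + b k)) =
      fun y => ∑ k, c k * ((1 - Real.tanh (w k * y + b k) ^ 2) * w k) := by
    funext y
    exact (HasDerivAt.fun_sum fun k _ =>
      ((hasDerivAt_tanh' (w k * y + b k)).comp y (hlin k y)).const_mul (c k)).deriv
  rw [h1]
  refine (HasDerivAt.fun_sum fun k _ =>
    (((hasDerivAt_one_sub_tanh_sq (w k * x + b k)).comp x (hlin k x)).mul_const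
      (w k)).const_mul (c k)).deriv.trans ?_
  exact Finset.sum_congr rfl fun k _ => by ring

/-- The residual `û″(x) + a² sin(a x)` of the Poisson equation, with `û″` written in
closed form through `tanhSecond`. -/
noncomputable def poissonResidual {K : ℕ} (a : ℝ) (c w b : Fin K → ℝ) (x : ℝ) : ℝ :=
  (∑ j, c j * w j ^ 2 * tanhSecond (w j * x + b j)) + a ^ 2 * Real.sin (a * x)

lemma continuous_poissonResidual {K : ℕ} (a : ℝ) (c w b : Fin K → ℝ) :
    Continuous (poissonResidual a c w b) := by
  have : Continuous tanhSecond :=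
    continuous_iff_continuousAt.2 fun s => (hasDerivAt_tanhSecond s).continuousAt
  unfold poissonResidual
  fun_prop

lemma abs_poissonResidual_le {K : ℕ} (a : ℝ) (c w b : Fin K → ℝ) (x : ℝ) :
    |poissonResidual a c w b x| ≤ 2 * ((∑ j, |c j| * w j ^ 2) + a ^ 2) := by
  have h1 : |∑ j, c j * w j ^ 2 * tanhSecond (w j * x + b j)| ≤ 2 * ∑ j, |c j| * w j ^ 2 := by
    rw [Finset.mul_sum]
    refine (Finset.abs_sum_le_sum_abs _ _).trans (Finset.sum_le_sum fun j _ => ?_)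
    rw [abs_mul, abs_mul, abs_of_nonneg (sq_nonneg (w j)), mul_comm]
    exact mul_le_mul_of_nonneg_right (abs_tanhSecond_le _) (by positivity)
  have h2 : |a ^ 2 * Real.sin (a * x)| ≤ a ^ 2 := by
    rw [abs_mul, abs_of_nonneg (sq_nonneg a)]
    exact mul_le_of_le_one_right (sq_nonneg a) (Real.abs_sin_le_one _)
  have h3 := abs_add_le (∑ j, c j * w j ^ 2 * tanhSecond (w j * x + b j))
    (a ^ 2 * Real.sin (a * x))
  rw [poissonResidual]
  linarith [sq_nonneg a]

lemma abs_poissonResidual_update_sub_le {K : ℕ} (a : ℝ) (c w b : Fin K → ℝ) (k : Fin K) (t x : ℝ) :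
    |poissonResidual a c w (Function.update b k t) x - poissonResidual a c w b x| ≤
      2 * (|c k| * w k ^ 2) * |t - b k| := by
  have h : poissonResidual a c w (Function.update b k t) x - poissonResidual a c w b x =
      c k * w k ^ 2 * (tanhSecond (w k * x + t) - tanhSecond (w k * x + b k)) := by
    rw [poissonResidual, poissonResidual, add_sub_add_right_eq_sub, ← Finset.sum_sub_distrib,
      Finset.sum_eq_single k]
    · rw [Function.update_self]
      ring
    · intro j _ hj
      rw [Function.update_of_ne hj, sub_self]
    · simp
  have h1 := abs_tanhSecond_sub_le (w k * x + b k) (w k * x + t)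
  rw [add_sub_add_left_eq_sub] at h1
  rw [h, abs_mul, abs_mul, abs_of_nonneg (sq_nonneg (w k))]
  calc |c k| * w k ^ 2 * |tanhSecond (w k * x + t) - tanhSecond (w k * x + b k)|
      ≤ |c k| * w k ^ 2 * (2 * |t - b k|) := mul_le_mul_of_nonneg_left h1 (by positivity)
    _ = _ := by ring

/-- Theorem 4.1 (Appendix A.7.2), b-component, original PDE: for the Poisson
loss `L_F(c,w,b) = (1/(2π)) ∫₀^{2π} (û″(x) + a² sin(a x))² dx` with
`û(x) = ∑ k, c k * tanh (w k * x + b k)`, the partial derivative with respect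
to `b k` satisfies `|∂L_F/∂b_k| ≤ 8 (∑ j, |c j| w j² + a²) · |c k| w k²`. -/
theorem stmt_13 (K : ℕ) (a : ℝ) (c w b : Fin K → ℝ)
    (L : (Fin K → ℝ) → (Fin K → ℝ) → (Fin K → ℝ) → ℝ)
    (hL : ∀ c' w' b', L c' w' b' =
      (1 / (2 * Real.pi)) * ∫ x in (0:ℝ)..(2 * Real.pi),
        (deriv (deriv fun y => ∑ k, c' k * Real.tanh (w' k * y + b' k)) x
          + a ^ 2 * Real.sin (a * x)) ^ 2)
    (k : Fin K) :
    |deriv (fun t => L c w (Function.update b k t)) (b k)| ≤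
      8 * ((∑ j, |c j| * w j ^ 2) + a ^ 2) * (|c k| * w k ^ 2) := by
  have hL' : ∀ b', L c w b' =
      (1 / (2 * Real.pi)) * ∫ x in (0:ℝ)..(2 * Real.pi), poissonResidual a c w b' x ^ 2 := by
    intro b'
    simp only [hL, deriv_deriv_network, poissonResidual]
  have hI : ∀ b', IntervalIntegrable (fun x => poissonResidual a c w b' x ^ 2)
      MeasureTheory.volume 0 (2 * Real.pi) := fun b' =>
    ((continuous_poissonResidual a c w b').pow 2).intervalIntegrable _ _
  set S := (∑ j, |c j| * w j ^ 2) + a ^ 2 with hS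
  have hS0 : 0 ≤ S := by positivity
  rw [← Real.norm_eq_abs]
  refine norm_deriv_le_of_lip' (by positivity) (Filter.Eventually.of_forall fun t => ?_)
  rw [Function.update_eq_self, Real.norm_eq_abs, Real.norm_eq_abs, hL', hL', ← mul_sub,
    ← intervalIntegral.integral_sub (hI _) (hI _)]
  have hint := intervalIntegral.norm_integral_le_of_norm_le_const (a := 0) (b := 2 * Real.pi)
    (f := fun x => poissonResidual a c w (Function.update b k t) x ^ 2 -
      poissonResidual a c w b x ^ 2)
    (C := 8 * S * (|c k| * w k ^ 2) * |t - b k|) fun x _ => by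
      have h1 := abs_poissonResidual_update_sub_le a c w b k t x
      have h2 := (abs_add_le _ _).trans
        (add_le_add (abs_poissonResidual_le a c w (Function.update b k t) x)
          (abs_poissonResidual_le a c w b x))
      rw [Real.norm_eq_abs, sq_sub_sq, abs_mul]
      refine (mul_le_mul h2 h1 (abs_nonneg _) (by positivity)).trans_eq ?_
      rw [← hS]
      ring
  have hpi : 0 < 2 * Real.pi := by positivity
  rw [Real.norm_eq_abs, sub_zero, abs_of_pos hpi] at hint
  rw [abs_mul, abs_of_pos (one_div_pos.2 hpi), one_div, inv_mul_le_iff₀ hpi]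
  linarith
end

section
/- Let K be a natural number, a ∈ ℝ, and c, w, b, c_p ∈ ℝ^K. Define û(x) = Σ_{k=1}^K c_k tanh(w_k x + b_k), p̂(x) = Σ_{k=1}^K c_{p,k} tanh(w_k x + b_k), and the transformed PDE loss L̃_F(c, w, b, c_p) = (1/(2π)) ∫₀^{2π} [ (p̂′(x) + a² sin(a x))² + (p̂(x) − û′(x))² ] dx. Then for every index k, the partial derivative of L̃_F with respect to w_k satisfies |∂L̃_F/∂w_k| ≤ 40π (Σ_{j=1}^K |c_{p,j}| + Σ_{j=1}^K max(|c_j|, |c_{p,j}|) |w_j| + a²) · max(|c_k|, |c_{p,k}|) · max(|w_k|, 1). -/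
/-!
The derivative of the loss in `w k` is estimated by a direct difference quotient, so no
differentiation under the integral sign is needed. As `tanh` and `1 - tanh²` are bounded by `1`
and Lipschitz with constants `1` and `2`, changing `w k` by `h` changes the network by at most
`|c k| |h| |x|` (`abs_net_update_sub_le`) and its spatial derivative by at most
`|c k| |h| (1 + 2 |w k| |x|)` (`abs_netDeriv_update_sub_le`). On `[0, 2π]`, both residuals therefore
move by at most `r |h|` with `r = 7π · max |c k| |cp k| · max |w k| 1`, while at the base point
both are bounded by `Q = ∑ |cp j| + ∑ max |c j| |cp j| |w j| + a²`. Since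
`y² - z² = (y - z) (2 z + (y - z))`, the integrand, hence the averaged loss, moves by at most
`|h| (4 r Q + 2 r² |h|)`. Letting `h → 0` gives the bound `4 r Q = 28π ⋯ ≤ 40π ⋯`.
-/

/-! ### The network and its dependence on one weight -/

/-- The single-hidden-layer network `x ↦ ∑ j, c j * tanh (w j * x + b j)`. -/
noncomputable def net {K : ℕ} (c w b : Fin K → ℝ) (x : ℝ) : ℝ :=
  ∑ j, c j * Real.tanh (w j * x + b j)

/-- The spatial derivative of `net`, written out with `tanh' = 1 - tanh²`. -/
noncomputable def netDeriv {K : ℕ} (c w b : Fin K → ℝ) (x : ℝ) : ℝ :=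
  ∑ j, c j * (w j * (1 - Real.tanh (w j * x + b j) ^ 2))

lemma hasDerivAt_real_tanh (x : ℝ) : HasDerivAt Real.tanh (1 - Real.tanh x ^ 2) x := by
  have hc : Real.cosh x ≠ 0 := (Real.cosh_pos x).ne'
  have h := (Real.hasDerivAt_sinh x).div (Real.hasDerivAt_cosh x) hc
  have e : Real.tanh = Real.sinh / Real.cosh := by
    funext y
    simp [Real.tanh_eq_sinh_div_cosh]
  rw [e]
  refine h.congr_deriv ?_
  simp only [Pi.div_apply]
  field_simp

lemma continuous_real_tanh : Continuous Real.tanh :=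
  continuous_iff_continuousAt.2 fun x => (hasDerivAt_real_tanh x).continuousAt

lemma abs_one_sub_tanh_sq_le (x : ℝ) : |1 - Real.tanh x ^ 2| ≤ 1 := by
  have h := Real.tanh_sq_lt_one x
  rw [abs_le]
  constructor <;> nlinarith [sq_nonneg (Real.tanh x)]

lemma abs_tanh_sub_tanh_le (x y : ℝ) : |Real.tanh x - Real.tanh y| ≤ |x - y| := by
  have h := Convex.norm_image_sub_le_of_norm_deriv_le (f := Real.tanh) (C := 1)
    (s := Set.univ) (x := y) (y := x) (fun z _ => (hasDerivAt_real_tanh z).differentiableAt)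
    (fun z _ => by
      rw [(hasDerivAt_real_tanh z).deriv]
      exact abs_one_sub_tanh_sq_le z) convex_univ trivial trivial
  simpa using h

lemma abs_tanh_sq_sub_tanh_sq_le (x y : ℝ) :
    |Real.tanh x ^ 2 - Real.tanh y ^ 2| ≤ 2 * |x - y| := by
  have h1 : |Real.tanh x + Real.tanh y| ≤ 2 := by
    have := abs_add_le (Real.tanh x) (Real.tanh y)
    linarith [Real.abs_tanh_lt_one x, Real.abs_tanh_lt_one y]
  rw [sq_sub_sq, abs_mul]
  exact mul_le_mul h1 (abs_tanh_sub_tanh_le x y) (abs_nonneg _) (by norm_num)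

section Network

variable {K : ℕ} (c w b : Fin K → ℝ)

lemma hasDerivAt_net (x : ℝ) : HasDerivAt (net c w b) (netDeriv c w b x) x := by
  unfold net netDeriv
  refine HasDerivAt.fun_sum fun j _ => ?_
  have h : HasDerivAt (fun y => w j * y + b j) (w j) x := by
    simpa using ((hasDerivAt_id x).const_mul (w j)).add_const (b j)
  have := ((hasDerivAt_real_tanh (w j * x + b j)).comp x h).const_mul (c j)
  refine HasDerivAt.congr_deriv this ?_
  ring

lemma continuous_net : Continuous (net c w b) :=
  continuous_iff_continuousAt.2 fun x => (hasDerivAt_net c w b x).continuousAt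

lemma continuous_netDeriv : Continuous (netDeriv c w b) := by
  unfold netDeriv
  have := continuous_real_tanh
  fun_prop

lemma abs_net_le (x : ℝ) : |net c w b x| ≤ ∑ j, |c j| := by
  refine (Finset.abs_sum_le_sum_abs _ _).trans (Finset.sum_le_sum fun j _ => ?_)
  rw [abs_mul]
  exact mul_le_of_le_one_right (abs_nonneg _) (Real.abs_tanh_lt_one _).le

lemma abs_netDeriv_le (x : ℝ) : |netDeriv c w b x| ≤ ∑ j, |c j| * |w j| := by
  refine (Finset.abs_sum_le_sum_abs _ _).trans (Finset.sum_le_sum fun j _ => ?_)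
  rw [abs_mul, abs_mul]
  exact mul_le_mul_of_nonneg_left
    (mul_le_of_le_one_right (abs_nonneg _) (abs_one_sub_tanh_sq_le _)) (abs_nonneg _)

lemma net_update_sub (k : Fin K) (t x : ℝ) :
    net c (Function.update w k t) b x - net c w b x =
      c k * (Real.tanh (t * x + b k) - Real.tanh (w k * x + b k)) := by
  unfold net
  rw [← Finset.sum_sub_distrib, Finset.sum_eq_single k]
  · simp [mul_sub]
  · intro j _ hj
    simp [Function.update_of_ne hj]
  · simp

lemma netDeriv_update_sub (k : Fin K) (t x : ℝ) :
    netDeriv c (Function.update w k t) b x - netDeriv c w b x =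
      c k * (t * (1 - Real.tanh (t * x + b k) ^ 2)
        - w k * (1 - Real.tanh (w k * x + b k) ^ 2)) := by
  unfold netDeriv
  rw [← Finset.sum_sub_distrib, Finset.sum_eq_single k]
  · simp [mul_sub]
  · intro j _ hj
    simp [Function.update_of_ne hj]
  · simp

lemma abs_net_update_sub_le (k : Fin K) (t x : ℝ) :
    |net c (Function.update w k t) b x - net c w b x| ≤ |c k| * (|t - w k| * |x|) := by
  rw [net_update_sub, abs_mul]
  refine mul_le_mul_of_nonneg_left ((abs_tanh_sub_tanh_le _ _).trans_eq ?_) (abs_nonneg _)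
  rw [← abs_mul]
  congr 1
  ring

lemma abs_netDeriv_update_sub_le (k : Fin K) (t x : ℝ) :
    |netDeriv c (Function.update w k t) b x - netDeriv c w b x| ≤
      |c k| * (|t - w k| * (1 + 2 * |w k| * |x|)) := by
  rw [netDeriv_update_sub, abs_mul]
  refine mul_le_mul_of_nonneg_left ?_ (abs_nonneg _)
  -- Only the base value `w k` multiplies the Lipschitz term, so the bound is uniform in `t`.
  have e : t * (1 - Real.tanh (t * x + b k) ^ 2) - w k * (1 - Real.tanh (w k * x + b k) ^ 2)
      = (t - w k) * (1 - Real.tanh (t * x + b k) ^ 2)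
        - w k * (Real.tanh (t * x + b k) ^ 2 - Real.tanh (w k * x + b k) ^ 2) := by ring
  have h1 := mul_le_of_le_one_right (abs_nonneg (t - w k))
    (abs_one_sub_tanh_sq_le (t * x + b k))
  have h2 := mul_le_mul_of_nonneg_left
    (abs_tanh_sq_sub_tanh_sq_le (t * x + b k) (w k * x + b k)) (abs_nonneg (w k))
  have h3 : |t * x + b k - (w k * x + b k)| = |t - w k| * |x| := by
    rw [← abs_mul]
    congr 1
    ring
  rw [h3] at h2
  rw [e]
  refine (abs_sub _ _).trans ?_
  rw [abs_mul, abs_mul]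
  linarith

end Network

/-! ### The integrand and the loss -/

lemma abs_sq_sub_sq_le {y z d q : ℝ} (hd : |y - z| ≤ d) (hz : |z| ≤ q) :
    |y ^ 2 - z ^ 2| ≤ d * (2 * q + d) := by
  have h : |2 * z + (y - z)| ≤ 2 * q + d := by
    refine (abs_add_le _ _).trans ?_
    rw [abs_mul, abs_two]
    linarith
  have e : y ^ 2 - z ^ 2 = (y - z) * (2 * z + (y - z)) := by ring
  rw [e, abs_mul]
  exact mul_le_mul hd h (abs_nonneg _) ((abs_nonneg _).trans hd)

/-- The sum of the squared residuals at `x`: the integrand of the loss. -/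
noncomputable def lossIntegrand {K : ℕ} (a : ℝ) (c w b cp : Fin K → ℝ) (x : ℝ) : ℝ :=
  (netDeriv cp w b x + a ^ 2 * Real.sin (a * x)) ^ 2 + (net cp w b x - netDeriv c w b x) ^ 2

lemma continuous_lossIntegrand {K : ℕ} (a : ℝ) (c w b cp : Fin K → ℝ) :
    Continuous (lossIntegrand a c w b cp) := by
  unfold lossIntegrand
  have h1 := continuous_netDeriv c w b
  have h2 := continuous_netDeriv cp w b
  have h3 := continuous_net cp w b
  fun_prop

lemma abs_lossIntegrand_update_sub_le {K : ℕ} (a : ℝ) (c w b cp : Fin K → ℝ) (k : Fin K)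
    (t x : ℝ) (hx : |x| ≤ 2 * Real.pi) :
    |lossIntegrand a c (Function.update w k t) b cp x - lossIntegrand a c w b cp x| ≤
      2 * (7 * Real.pi * (max |c k| |cp k| * max |w k| 1) * |t - w k| *
        (2 * ((∑ j, |cp j|) + (∑ j, max |c j| |cp j| * |w j|) + a ^ 2)
          + 7 * Real.pi * (max |c k| |cp k| * max |w k| 1) * |t - w k|)) := by
  set P := ∑ j, |cp j| with hP
  set S := ∑ j, max |c j| |cp j| * |w j| with hS
  set M := max |c k| |cp k| with hM
  set W := max |w k| 1 with hW
  set h := |t - w k| with hh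
  have hπ : 1 ≤ Real.pi := by linarith [Real.pi_gt_three]
  have hh0 : 0 ≤ h := abs_nonneg _
  have hM0 : 0 ≤ M := (abs_nonneg _).trans (le_max_left _ _)
  have hW1 : 1 ≤ W := le_max_right _ _
  have hwW : |w k| ≤ W := le_max_left _ _
  have hP0 : 0 ≤ P := Finset.sum_nonneg fun j _ => abs_nonneg _
  have hcS : |netDeriv c w b x| ≤ S := (abs_netDeriv_le c w b x).trans
    (Finset.sum_le_sum fun j _ => mul_le_mul_of_nonneg_right (le_max_left _ _) (abs_nonneg _))
  have hpS : |netDeriv cp w b x| ≤ S := (abs_netDeriv_le cp w b x).trans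
    (Finset.sum_le_sum fun j _ => mul_le_mul_of_nonneg_right (le_max_right _ _) (abs_nonneg _))
  have hp : |net cp w b x| ≤ P := abs_net_le cp w b x
  have hsin : |a ^ 2 * Real.sin (a * x)| ≤ a ^ 2 := by
    rw [abs_mul, abs_of_nonneg (sq_nonneg a)]
    exact mul_le_of_le_one_right (sq_nonneg a) (Real.abs_sin_le_one _)
  have hwx : 1 + 2 * |w k| * |x| ≤ W * (1 + 4 * Real.pi) := by
    have : |w k| * |x| ≤ W * (2 * Real.pi) :=
      mul_le_mul hwW hx (abs_nonneg _) (by linarith)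
    linarith
  have hxW : |x| ≤ W * (2 * Real.pi) := by nlinarith
  have dD : ∀ d : Fin K → ℝ, |d k| ≤ M →
      |netDeriv d (Function.update w k t) b x - netDeriv d w b x| ≤
        M * (h * (W * (1 + 4 * Real.pi))) := fun d hd =>
    (abs_netDeriv_update_sub_le d w b k t x).trans
      (mul_le_mul hd (mul_le_mul_of_nonneg_left hwx hh0) (by positivity) hM0)
  have dN : |net cp (Function.update w k t) b x - net cp w b x| ≤
      M * (h * (W * (2 * Real.pi))) :=
    (abs_net_update_sub_le cp w b k t x).trans
      (mul_le_mul (le_max_right _ _) (mul_le_mul_of_nonneg_left hxW hh0) (by positivity) hM0)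
  have dc := dD c (le_max_left _ _)
  have dp := dD cp (le_max_right _ _)
  have hMWh : 0 ≤ M * W * h := by positivity
  have hscale : M * W * h * (1 + 6 * Real.pi) ≤ M * W * h * (7 * Real.pi) :=
    mul_le_mul_of_nonneg_left (by linarith) hMWh
  have hMWhpi : 0 ≤ M * W * h * Real.pi := by positivity
  have A := abs_sq_sub_sq_le
    (y := netDeriv cp (Function.update w k t) b x + a ^ 2 * Real.sin (a * x))
    (z := netDeriv cp w b x + a ^ 2 * Real.sin (a * x))
    (d := 7 * Real.pi * (M * W) * h) (q := P + S + a ^ 2)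
    (by
      rw [add_sub_add_right_eq_sub]
      refine dp.trans ?_
      linarith)
    ((abs_add_le _ _).trans (by linarith))
  have B := abs_sq_sub_sq_le
    (y := net cp (Function.update w k t) b x - netDeriv c (Function.update w k t) b x)
    (z := net cp w b x - netDeriv c w b x)
    (d := 7 * Real.pi * (M * W) * h) (q := P + S + a ^ 2)
    (by
      rw [sub_sub_sub_comm]
      refine (abs_sub _ _).trans ?_
      linarith)
    ((abs_sub _ _).trans (by linarith [sq_nonneg a]))
  unfold lossIntegrand
  rw [add_sub_add_comm]
  refine (abs_add_le _ _).trans ?_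
  linarith


/-- Theorem 4.1 (Appendix A.7.2), w-component, transformed PDE (extra fields):
for the loss `L̃_F(c,w,b,c_p) = (1/(2π)) ∫₀^{2π} [(p̂′(x) + a² sin(a x))²
+ (p̂(x) - û′(x))²] dx` with `û = ∑ k, c k * tanh (w k * x + b k)` and
`p̂ = ∑ k, c_p k * tanh (w k * x + b k)`, the partial derivative with respect
to `w k` satisfies `|∂L̃_F/∂w_k| ≤ 40π (∑ j |c_p j| + ∑ j max(|c j|,|c_p j|) |w j| + a²) · max(|c k|,|c_p k|) · max(|w k|,1)`. -/
theorem stmt_15 (K : ℕ) (a : ℝ) (c w b cp : Fin K → ℝ)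
    (L : (Fin K → ℝ) → (Fin K → ℝ) → (Fin K → ℝ) → (Fin K → ℝ) → ℝ)
    (hL : ∀ c' w' b' cp', L c' w' b' cp' =
      (1 / (2 * Real.pi)) * ∫ x in (0:ℝ)..(2 * Real.pi),
        ((deriv (fun y => ∑ k, cp' k * Real.tanh (w' k * y + b' k)) x
            + a ^ 2 * Real.sin (a * x)) ^ 2
         + ((∑ k, cp' k * Real.tanh (w' k * x + b' k))
            - deriv (fun y => ∑ k, c' k * Real.tanh (w' k * y + b' k)) x) ^ 2))
    (k : Fin K) :
    |deriv (fun t => L c (Function.update w k t) b cp) (w k)| ≤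
      40 * Real.pi * ((∑ j, |cp j|) + (∑ j, max |c j| |cp j| * |w j|) + a ^ 2) *
        (max |c k| |cp k| * max |w k| 1) := by
  set P := ∑ j, |cp j| with hP
  set S := ∑ j, max |c j| |cp j| * |w j| with hS
  set R := max |c k| |cp k| * max |w k| 1 with hR
  have hπ := Real.pi_pos
  have hR0 : 0 ≤ R := mul_nonneg ((abs_nonneg _).trans (le_max_left _ _))
    ((abs_nonneg _).trans (le_max_left _ _))
  have hQ0 : 0 ≤ P + S + a ^ 2 :=
    add_nonneg (add_nonneg (Finset.sum_nonneg fun j _ => abs_nonneg _)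
      (Finset.sum_nonneg fun j _ =>
        mul_nonneg ((abs_nonneg _).trans (le_max_left _ _)) (abs_nonneg _))) (sq_nonneg a)
  have hL' : ∀ w', L c w' b cp =
      (1 / (2 * Real.pi)) * ∫ x in (0:ℝ)..(2 * Real.pi), lossIntegrand a c w' b cp x := by
    intro w'
    rw [hL]
    congr 2
    funext x
    have h1 := (hasDerivAt_net cp w' b x).deriv
    have h2 := (hasDerivAt_net c w' b x).deriv
    unfold net at h1 h2
    rw [h1, h2]
    rfl
  -- The loss is the average of the integrand, so the pointwise bound passes to it unchanged.
  have hdiff : ∀ t, |L c (Function.update w k t) b cp - L c w b cp| ≤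
      2 * (7 * Real.pi * R * |t - w k| *
        (2 * (P + S + a ^ 2) + 7 * Real.pi * R * |t - w k|)) := by
    intro t
    rw [hL', hL', ← mul_sub, ← intervalIntegral.integral_sub
      ((continuous_lossIntegrand _ _ _ _ _).intervalIntegrable _ _)
      ((continuous_lossIntegrand _ _ _ _ _).intervalIntegrable _ _), abs_mul]
    have hI := intervalIntegral.norm_integral_le_of_norm_le_const
      (a := 0) (b := 2 * Real.pi)
      (f := fun x => lossIntegrand a c (Function.update w k t) b cp x
        - lossIntegrand a c w b cp x)
      (C := 2 * (7 * Real.pi * R * |t - w k| *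
        (2 * (P + S + a ^ 2) + 7 * Real.pi * R * |t - w k|)))
      (fun x hx => by
        rw [Set.uIoc_of_le (by positivity)] at hx
        refine abs_lossIntegrand_update_sub_le a c w b cp k t x ?_
        rw [abs_of_pos hx.1]
        exact hx.2)
    rw [sub_zero, abs_of_pos (by positivity : 0 < 2 * Real.pi), Real.norm_eq_abs] at hI
    rw [abs_of_pos (by positivity : 0 < 1 / (2 * Real.pi)), one_div, inv_mul_le_iff₀ (by positivity)]
    linarith
  -- The quadratic remainder `2 r² |h|` is absorbed into an arbitrary `ε > 0` for `t` near `w k`.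
  -- A Lipschitz bound at the point controls `deriv` whether or not the loss is differentiable.
  refine le_of_forall_pos_le_add fun ε hε => ?_
  rw [← Real.norm_eq_abs]
  refine norm_deriv_le_of_lip' (by positivity) ?_
  have hcont : Continuous fun t : ℝ => 2 * (7 * Real.pi * R) ^ 2 * |t - w k| := by fun_prop
  have hev : ∀ᶠ t in nhds (w k), 2 * (7 * Real.pi * R) ^ 2 * |t - w k| < ε :=
    hcont.continuousAt.eventually_lt continuousAt_const (by simpa using hε)
  filter_upwards [hev] with t ht
  rw [Real.norm_eq_abs, Real.norm_eq_abs, Function.update_eq_self]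
  refine (hdiff t).trans ?_
  have h12 : 0 ≤ 12 * (Real.pi * (P + S + a ^ 2) * R) := by positivity
  calc 2 * (7 * Real.pi * R * |t - w k| * (2 * (P + S + a ^ 2) + 7 * Real.pi * R * |t - w k|))
      = (28 * Real.pi * (P + S + a ^ 2) * R + 2 * (7 * Real.pi * R) ^ 2 * |t - w k|)
          * |t - w k| := by ring
    _ ≤ (40 * Real.pi * (P + S + a ^ 2) * R + ε) * |t - w k| :=
        mul_le_mul_of_nonneg_right (by linarith) (abs_nonneg _)
end
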